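/- Let L be a positive integer and let u, v ∈ ℝⁿ be nonzero unit vectors all of whose squared entries are integer multiples of 1/L, with expanded supports Ū and V̄ in {1,...,n}×{1,...,L}. Let (h(ℓ))_{ℓ∈{1,...,n}×{1,...,L}} be independent random variables, each uniformly distributed on [0,1]. Let ℓ_U and ℓ_V be the (almost surely unique) minimizers of h over Ū and over V̄, with first coordinates (block indices) j_U and j_V, and define Z = 1[h(ℓ_U) = h(ℓ_V)] · u[j_U]·v[j_V] / min(u[j_U]², v[j_V]²). Then E[Z] = ⟨u,v⟩ / M, where M = ∑_{j=1}^{n} max(u[j]², v[j]²). -/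

import Mathlib

open MeasureTheory Finset
open scoped ENNReal

/-- The product measure on `J → ℝ` in which each coordinate is an independent
uniform random variable on `[0,1]`: a uniform hash family on `J`. -/
noncomputable def uniformHash (J : Type*) [Fintype J] : Measure (J → ℝ) :=
  Measure.pi fun _ : J => (volume : Measure ℝ).restrict (Set.Icc 0 1)

/-- A minimizer of `f` over the nonempty finite set `s` (the minimizer of a uniform
hash family over a nonempty set is almost surely unique). -/
noncomputable def argminOn {α : Type*} (s : Finset α) (hs : s.Nonempty) (f : α → ℝ) : α :=
  (s.exists_min_image f hs).choose

/-- The expanded support of a vector `u` with discretization parameter `L`: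
`Ū = {(i,k) ∈ {1,...,n} × {1,...,L} : k ≤ u[i]² ⬝ L}`, so that the block
`{i} × {1,...,L}` contributes exactly `u[i]² ⬝ L` elements when `u[i]²` is an
integer multiple of `1/L`.  (Here `Fin L` represents `{1,...,L}` via `k ↦ k+1`.) -/
noncomputable def expandedSupport {n : ℕ} (L : ℕ) (u : Fin n → ℝ) :
    Finset (Fin n × Fin L) :=
  Finset.univ.filter fun p => ((p.2 : ℕ) + 1 : ℝ) ≤ (u p.1) ^ 2 * L

/-- The weighted MinHash random variable
`Z = 1[h(ℓ_U) = h(ℓ_V)] ⬝ u[j_U] v[j_V] / min(u[j_U]², v[j_V]²)`, where `ℓ_U`, `ℓ_V` are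
the minimizers of the hash `h` over the expanded supports `Ū`, `V̄`, with block indices
`j_U = ℓ_U.1`, `j_V = ℓ_V.1`. -/
noncomputable def Zw {n L : ℕ} (u v : Fin n → ℝ)
    (hU : (expandedSupport L u).Nonempty) (hV : (expandedSupport L v).Nonempty)
    (h : Fin n × Fin L → ℝ) : ℝ :=
  (if h (argminOn (expandedSupport L u) hU h) = h (argminOn (expandedSupport L v) hV h)
      then (1 : ℝ) else 0) *
    (u (argminOn (expandedSupport L u) hU h).1 * v (argminOn (expandedSupport L v) hV h).1 /
      min ((u (argminOn (expandedSupport L u) hU h).1) ^ 2)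
        ((v (argminOn (expandedSupport L v) hV h).1) ^ 2))

/-!
Almost surely the hash values are distinct, so the minimizer `ℓ` over `U ∪ V` is unique, and by
exchangeability it is uniform on `U ∪ V`. The minimizers over `U` and over `V` collide exactly when
`ℓ ∈ U ∩ V`, and then both equal `ℓ`. Hence `Z` has expectation
`|U ∪ V|⁻¹ * ∑ ℓ ∈ U ∩ V, z ℓ`, where `z` is its value on a collision. Block `j` contributes
`L * min (u j ^ 2) (v j ^ 2)` elements to `U ∩ V`, cancelling the denominator of `z`, and
`L * max (u j ^ 2) (v j ^ 2)` elements to `U ∪ V`.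
-/

open ProbabilityTheory

section Argmin

variable {α : Type*} {s t : Finset α} {f : α → ℝ}

theorem argminOn_mem (hs : s.Nonempty) (f : α → ℝ) : argminOn s hs f ∈ s :=
  (s.exists_min_image f hs).choose_spec.1

theorem isMinOn_argminOn (hs : s.Nonempty) (f : α → ℝ) : IsMinOn f s (argminOn s hs f) :=
  isMinOn_iff.2 (s.exists_min_image f hs).choose_spec.2

theorem argminOn_eq_iff_isMinOn (hf : f.Injective) (hs : s.Nonempty) {a : α} (ha : a ∈ s) :
    argminOn s hs f = a ↔ IsMinOn f s a := by
  refine ⟨fun h => h ▸ isMinOn_argminOn hs f, fun h => hf ?_⟩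
  exact le_antisymm (isMinOn_argminOn hs f ha) (h (argminOn_mem hs f))

theorem argminOn_eq_argminOn_of_subset (hf : f.Injective) (hs : s.Nonempty) (ht : t.Nonempty)
    (hst : s ⊆ t) (h : argminOn t ht f ∈ s) : argminOn s hs f = argminOn t ht f :=
  (argminOn_eq_iff_isMinOn hf hs h).2 ((isMinOn_argminOn ht f).on_subset (mod_cast hst))

theorem argminOn_union_eq_of_argminOn_eq [DecidableEq α] (hf : f.Injective) (hs : s.Nonempty)
    (ht : t.Nonempty) (h : argminOn s hs f = argminOn t ht f) :
    argminOn (s ∪ t) (hs.mono subset_union_left) f = argminOn s hs f := by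
  refine (argminOn_eq_iff_isMinOn hf _ (mem_union_left t (argminOn_mem hs f))).2 fun a ha => ?_
  rcases mem_union.1 ha with has | hat
  · exact isMinOn_argminOn hs f has
  · exact h ▸ isMinOn_argminOn ht f hat

theorem argminOn_eq_argminOn_iff_argminOn_union_mem_inter [DecidableEq α] (hf : f.Injective)
    (hs : s.Nonempty) (ht : t.Nonempty) :
    argminOn s hs f = argminOn t ht f ↔
      argminOn (s ∪ t) (hs.mono subset_union_left) f ∈ s ∩ t := by
  constructor
  · intro h
    rw [argminOn_union_eq_of_argminOn_eq hf hs ht h]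
    exact mem_inter.2 ⟨argminOn_mem hs f, h ▸ argminOn_mem ht f⟩
  · intro h
    obtain ⟨h_mem_s, h_mem_t⟩ := mem_inter.1 h
    rw [argminOn_eq_argminOn_of_subset hf hs _ subset_union_left h_mem_s,
      argminOn_eq_argminOn_of_subset hf ht _ subset_union_right h_mem_t]

end Argmin

section IndependentFamilies

theorem ae_ne_of_indepFun {Ω β : Type*} [MeasurableSpace Ω] [MeasurableSpace β] [MeasurableEq β]
    {P : Measure Ω} [IsFiniteMeasure P] {X Y : Ω → β} (hX : AEMeasurable X P)
    (hY : AEMeasurable Y P) (hXY : IndepFun X Y P) [NullSingletonClass (P.map Y)] :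
    ∀ᵐ ω ∂P, X ω ≠ Y ω := by
  have diagonal_null : (P.map fun ω => (X ω, Y ω)) (Set.diagonal β) = 0 := by
    rw [hXY.map_prod_eq_prod_map_map hX hY, Measure.measure_prod_null measurableSet_diagonal]
    refine .of_forall fun x => ?_
    change P.map Y (Prod.mk x ⁻¹' Set.diagonal β) = 0
    have fiber : Prod.mk x ⁻¹' Set.diagonal β = {x} := by
      ext y
      simp [eq_comm]
    rw [fiber, measure_singleton]
  rwa [Measure.map_apply_of_aemeasurable (hX.prodMk hY) measurableSet_diagonal,
    measure_eq_zero_iff_ae_notMem] at diagonal_null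

theorem ae_injective_pi {ι β : Type*} [Fintype ι] [MeasurableSpace β] [MeasurableEq β]
    (μ : ι → Measure β) [∀ i, IsProbabilityMeasure (μ i)] [∀ i, NullSingletonClass (μ i)] :
    ∀ᵐ h ∂Measure.pi μ, Function.Injective h := by
  have pairwise_ne : ∀ᵐ h ∂Measure.pi μ, ∀ i j, i ≠ j → h i ≠ h j := by
    refine ae_all_iff.2 fun i => ae_all_iff.2 fun j => Filter.eventually_imp_distrib_left.2 ?_
    intro hij
    have indep : IndepFun (Function.eval i) (Function.eval j) (Measure.pi μ) :=
      (iIndepFun_pi (X := fun _ => id) fun _ => aemeasurable_id).indepFun hij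
    have : NullSingletonClass ((Measure.pi μ).map (Function.eval j)) := by
      rw [(measurePreserving_eval μ j).map_eq]
      infer_instance
    exact ae_ne_of_indepFun (measurable_pi_apply i).aemeasurable
      (measurable_pi_apply j).aemeasurable indep
  filter_upwards [pairwise_ne] with h hh i j
  exact not_imp_not.1 (hh i j)

theorem measurePreserving_comp_equiv {ι κ β : Type*} [Fintype ι] [Fintype κ] [MeasurableSpace β]
    (μ : Measure β) [SigmaFinite μ] (e : κ ≃ ι) :
    MeasurePreserving (fun h : ι → β => h ∘ e) (Measure.pi fun _ => μ) (Measure.pi fun _ => μ) :=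
  measurePreserving_arrowCongr' (fun _ => μ) (fun _ => μ) e.symm (.refl β) fun _ => .id μ

end IndependentFamilies

section MinHash

theorem measurableSet_setOf_isMinOn {J : Type*} (s : Finset J) (a : J) :
    MeasurableSet {h : J → ℝ | IsMinOn h s a} := by
  simp only [isMinOn_iff, Set.ofPred_forall]
  exact s.measurableSet_biInter fun b _ =>
    measurableSet_le (measurable_pi_apply a) (measurable_pi_apply b)

variable {J E : Type*} [Fintype J] [NormedAddCommGroup E] [NormedSpace ℝ E] [CompleteSpace E]
  {s t : Finset J} {a b : J}

theorem measureReal_isMinOn_congr (μ : Measure ℝ) [SigmaFinite μ] (ha : a ∈ s) (hb : b ∈ s) :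
    (Measure.pi fun _ : J => μ).real {h | IsMinOn h s a} =
      (Measure.pi fun _ : J => μ).real {h | IsMinOn h s b} := by
  classical
  have swap_mem_iff (c : J) : Equiv.swap a b c ∈ s ↔ c ∈ s := by
    rw [Equiv.swap_apply_def]
    split_ifs <;> simp_all
  have isMinOn_comp_swap_iff (h : J → ℝ) :
      IsMinOn (h ∘ Equiv.swap a b) s a ↔ IsMinOn h s b := by
    simp only [isMinOn_iff, Function.comp_apply, Equiv.swap_apply_left, mem_coe]
    rw [(Equiv.swap a b).forall_congr_left]
    simp [swap_mem_iff]
  rw [← (measurePreserving_comp_equiv μ (Equiv.swap a b)).measureReal_preimage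
    (measurableSet_setOf_isMinOn s a).nullMeasurableSet]
  simp only [Set.preimage_ofPred_eq, isMinOn_comp_swap_iff]

variable (μ : Measure ℝ) [IsProbabilityMeasure μ] [NullSingletonClass μ]

theorem sum_measureReal_isMinOn (hs : s.Nonempty) :
    ∑ a ∈ s, (Measure.pi fun _ : J => μ).real {h | IsMinOn h s a} = 1 := by
  have pairwise_aedisjoint : Set.Pairwise (s : Set J)
      (Function.onFun (AEDisjoint (Measure.pi fun _ : J => μ)) fun a => {h | IsMinOn h s a}) := by
    intro a ha b hb hab
    refine measure_eq_zero_iff_ae_notMem.2 ?_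
    filter_upwards [ae_injective_pi fun _ : J => μ] with h h_inj ⟨min_a, min_b⟩
    exact hab (h_inj (le_antisymm (min_a hb) (min_b ha)))
  have iUnion_eq_univ : ⋃ a ∈ s, {h : J → ℝ | IsMinOn h s a} = Set.univ :=
    Set.eq_univ_of_forall fun h =>
      Set.mem_biUnion (argminOn_mem hs h) (isMinOn_argminOn hs h)
  rw [← measureReal_biUnion_finset₀ pairwise_aedisjoint
    fun a _ => (measurableSet_setOf_isMinOn s a).nullMeasurableSet, iUnion_eq_univ,
    probReal_univ]

theorem measureReal_isMinOn (ha : a ∈ s) :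
    (Measure.pi fun _ : J => μ).real {h | IsMinOn h s a} = (#s : ℝ)⁻¹ := by
  have sum_eq_one := sum_measureReal_isMinOn μ ⟨a, ha⟩
  rw [sum_congr rfl fun b hb => measureReal_isMinOn_congr μ hb ha, sum_const,
    nsmul_eq_mul] at sum_eq_one
  exact eq_inv_of_mul_eq_one_right sum_eq_one

theorem integral_comp_argminOn (hs : s.Nonempty) (F : J → E) :
    ∫ h, F (argminOn s hs h) ∂(Measure.pi fun _ : J => μ) = (#s : ℝ)⁻¹ • ∑ a ∈ s, F a := by
  classical
  have ae_eq_sum : ∀ᵐ h ∂(Measure.pi fun _ : J => μ), F (argminOn s hs h) =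
      ∑ a ∈ s, {h : J → ℝ | IsMinOn h s a}.indicator (fun _ => F a) h := by
    filter_upwards [ae_injective_pi fun _ : J => μ] with h h_inj
    calc F (argminOn s hs h)
        = ∑ a ∈ s, if argminOn s hs h = a then F a else 0 := by
          rw [sum_ite_eq, if_pos (argminOn_mem hs h)]
      _ = ∑ a ∈ s, {h : J → ℝ | IsMinOn h s a}.indicator (fun _ => F a) h :=
          sum_congr rfl fun a ha => by
            simp only [argminOn_eq_iff_isMinOn h_inj hs ha, Set.indicator_apply, Set.mem_ofPred_eq]
  calc ∫ h, F (argminOn s hs h) ∂(Measure.pi fun _ : J => μ)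
      = ∑ a ∈ s, (Measure.pi fun _ : J => μ).real {h | IsMinOn h s a} • F a := by
        rw [integral_congr_ae ae_eq_sum, integral_finsetSum _ fun a _ =>
          (integrable_const _).indicator (measurableSet_setOf_isMinOn s a)]
        simp only [integral_indicator_const _ (measurableSet_setOf_isMinOn s _)]
    _ = (#s : ℝ)⁻¹ • ∑ a ∈ s, F a := by
        rw [smul_sum]
        exact sum_congr rfl fun a ha => by rw [measureReal_isMinOn μ ha]

theorem integral_ite_apply_argminOn_eq [DecidableEq J] (hs : s.Nonempty) (ht : t.Nonempty)
    (F : J → J → E) :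
    ∫ h, (if h (argminOn s hs h) = h (argminOn t ht h)
        then F (argminOn s hs h) (argminOn t ht h) else 0) ∂(Measure.pi fun _ : J => μ) =
      (#(s ∪ t) : ℝ)⁻¹ • ∑ a ∈ s ∩ t, F a a := by
  have hst : (s ∪ t).Nonempty := hs.mono subset_union_left
  have ae_eq : ∀ᵐ h ∂(Measure.pi fun _ : J => μ),
      (if h (argminOn s hs h) = h (argminOn t ht h)
        then F (argminOn s hs h) (argminOn t ht h) else 0) =
      if argminOn (s ∪ t) hst h ∈ s ∩ t
        then F (argminOn (s ∪ t) hst h) (argminOn (s ∪ t) hst h) else 0 := by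
    filter_upwards [ae_injective_pi fun _ : J => μ] with h h_inj
    simp only [h_inj.eq_iff, ← argminOn_eq_argminOn_iff_argminOn_union_mem_inter h_inj hs ht]
    refine if_ctx_congr Iff.rfl (fun h_eq => ?_) fun _ => rfl
    rw [argminOn_union_eq_of_argminOn_eq h_inj hs ht h_eq, ← h_eq]
  rw [integral_congr_ae ae_eq,
    integral_comp_argminOn μ hst fun a => if a ∈ s ∩ t then F a a else 0, sum_ite_mem,
    inter_eq_right.2 inter_subset_union]

end MinHash

section MinMaxSq

variable {ι R : Type*} [Ring R] [LinearOrder R] [IsStrictOrderedRing R]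

theorem sq_abs_inf_abs (u v : ι → R) (i : ι) :
    (|u| ⊓ |v|) i ^ 2 = min (u i ^ 2) (v i ^ 2) := by
  simp only [Pi.inf_apply, Pi.abs_apply]
  rcases le_total |u i| |v i| with h | h
  · rw [inf_eq_left.2 h, sq_abs, min_eq_left (sq_le_sq.2 h)]
  · rw [inf_eq_right.2 h, sq_abs, min_eq_right (sq_le_sq.2 h)]

theorem sq_abs_sup_abs (u v : ι → R) (i : ι) :
    (|u| ⊔ |v|) i ^ 2 = max (u i ^ 2) (v i ^ 2) := by
  simp only [Pi.sup_apply, Pi.abs_apply]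
  rcases le_total |u i| |v i| with h | h
  · rw [sup_eq_right.2 h, sq_abs, max_eq_right (sq_le_sq.2 h)]
  · rw [sup_eq_left.2 h, sq_abs, max_eq_left (sq_le_sq.2 h)]

theorem min_sq_mul_mul_div_min_sq {K : Type*} [Field K] [LinearOrder K] (x y : K) :
    min (x ^ 2) (y ^ 2) * (x * y / min (x ^ 2) (y ^ 2)) = x * y := by
  refine mul_div_cancel_of_imp' fun h => ?_
  rcases min_choice (x ^ 2) (y ^ 2) with h_min | h_min <;> simp_all

end MinMaxSq

section ExpandedSupport

theorem card_filter_val_add_one_le {L k : ℕ} (hk : k ≤ L) :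
    #{j : Fin L | ((j : ℕ) + 1 : ℝ) ≤ k} = k := by
  have add_one_le_iff (j : Fin L) : ((j : ℕ) + 1 : ℝ) ≤ k ↔ (j : ℕ) < k := by
    exact_mod_cast Nat.succ_le_iff
  simp only [add_one_le_iff, Fin.card_filter_val_lt, min_eq_right hk]

variable {n L : ℕ} {u v : Fin n → ℝ}

theorem mem_expandedSupport {p : Fin n × Fin L} :
    p ∈ expandedSupport L u ↔ ((p.2 : ℕ) + 1 : ℝ) ≤ u p.1 ^ 2 * L :=
  mem_filter_univ p

theorem sum_expandedSupport (hu : ∀ i, ∃ k ≤ L, u i ^ 2 = (k : ℝ) / L) (c : Fin n → ℝ) :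
    ∑ p ∈ expandedSupport L u, c p.1 = L * ∑ i, u i ^ 2 * c i := by
  rw [expandedSupport, sum_filter, Fintype.sum_prod_type, mul_sum]
  refine sum_congr rfl fun i _ => ?_
  obtain ⟨k, hk, hui⟩ := hu i
  have sq_mul_eq : u i ^ 2 * L = k := by
    rw [hui, div_mul_cancel_of_imp]
    rintro hL
    have : k = 0 := by simp_all
    exact_mod_cast this
  simp only [sq_mul_eq]
  rw [← sum_filter, sum_const, card_filter_val_add_one_le hk, nsmul_eq_mul, ← sq_mul_eq]
  ring

theorem expandedSupport_inter (L : ℕ) (u v : Fin n → ℝ) :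
    expandedSupport L u ∩ expandedSupport L v = expandedSupport L (|u| ⊓ |v|) := by
  ext p
  simp only [mem_inter, mem_expandedSupport, sq_abs_inf_abs, min_mul_of_nonneg _ _ L.cast_nonneg,
    le_min_iff]

theorem expandedSupport_union (L : ℕ) (u v : Fin n → ℝ) :
    expandedSupport L u ∪ expandedSupport L v = expandedSupport L (|u| ⊔ |v|) := by
  ext p
  simp only [mem_union, mem_expandedSupport, sq_abs_sup_abs, max_mul_of_nonneg _ _ L.cast_nonneg,
    le_max_iff]

theorem sum_expandedSupport_inter (hu : ∀ i, ∃ k ≤ L, u i ^ 2 = (k : ℝ) / L)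
    (hv : ∀ i, ∃ k ≤ L, v i ^ 2 = (k : ℝ) / L) (c : Fin n → ℝ) :
    ∑ p ∈ expandedSupport L u ∩ expandedSupport L v, c p.1 =
      L * ∑ i, min (u i ^ 2) (v i ^ 2) * c i := by
  rw [expandedSupport_inter, sum_expandedSupport]
  · simp only [sq_abs_inf_abs]
  · intro i
    rw [sq_abs_inf_abs]
    exact min_rec' (fun x : ℝ => ∃ k ≤ L, x = (k : ℝ) / L) (hu i) (hv i)

theorem card_expandedSupport_union (hu : ∀ i, ∃ k ≤ L, u i ^ 2 = (k : ℝ) / L)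
    (hv : ∀ i, ∃ k ≤ L, v i ^ 2 = (k : ℝ) / L) :
    (#(expandedSupport L u ∪ expandedSupport L v) : ℝ) =
      L * ∑ i, max (u i ^ 2) (v i ^ 2) := by
  rw [card_eq_sum_ones, Nat.cast_sum, Nat.cast_one, expandedSupport_union,
    sum_expandedSupport _ fun _ => 1]
  · simp only [sq_abs_sup_abs, mul_one]
  · intro i
    rw [sq_abs_sup_abs]
    exact max_rec' (fun x : ℝ => ∃ k ≤ L, x = (k : ℝ) / L) (hu i) (hv i)

theorem exists_le_sq_eq_div (hL : 0 < L) (hu1 : ∀ i, u i ^ 2 ≤ 1)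
    (hu : ∀ i, ∃ k : ℤ, u i ^ 2 = (k : ℝ) / L) (i : Fin n) :
    ∃ k ≤ L, u i ^ 2 = (k : ℝ) / L := by
  obtain ⟨k, hk⟩ := hu i
  have k_eq : (k : ℝ) = u i ^ 2 * L := by
    rw [hk, div_mul_cancel₀ _ (Nat.cast_ne_zero.2 hL.ne')]
  have k_nonneg : 0 ≤ k := by
    have : (0 : ℝ) ≤ k := k_eq ▸ by positivity
    exact_mod_cast this
  have k_le : k ≤ L := by
    have : (k : ℝ) ≤ L := k_eq ▸ mul_le_of_le_one_left L.cast_nonneg (hu1 i)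
    exact_mod_cast this
  lift k to ℕ using k_nonneg
  exact ⟨k, mod_cast k_le, by rw [hk, Int.cast_natCast]⟩

end ExpandedSupport

theorem weighted_minhash_expectation_general {n L : ℕ} (μ : Measure ℝ) [IsProbabilityMeasure μ]
    [NullSingletonClass μ] (u v : Fin n → ℝ)
    (hu : ∀ i, ∃ k ≤ L, u i ^ 2 = (k : ℝ) / L) (hv : ∀ i, ∃ k ≤ L, v i ^ 2 = (k : ℝ) / L)
    (hU : (expandedSupport L u).Nonempty) (hV : (expandedSupport L v).Nonempty) :
    ∫ h, Zw u v hU hV h ∂(Measure.pi fun _ : Fin n × Fin L => μ)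
      = (∑ k, u k * v k) / (∑ j, max (u j ^ 2) (v j ^ 2)) := by
  have L_ne_zero : (L : ℝ) ≠ 0 := by
    obtain ⟨p, -⟩ := hU
    exact_mod_cast p.2.pos.ne'
  calc ∫ h, Zw u v hU hV h ∂(Measure.pi fun _ : Fin n × Fin L => μ)
      = (#(expandedSupport L u ∪ expandedSupport L v) : ℝ)⁻¹ *
          ∑ p ∈ expandedSupport L u ∩ expandedSupport L v,
            u p.1 * v p.1 / min (u p.1 ^ 2) (v p.1 ^ 2) := by
        simp only [Zw, ite_mul, one_mul, zero_mul]
        exact integral_ite_apply_argminOn_eq μ hU hV fun p q =>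
          u p.1 * v q.1 / min (u p.1 ^ 2) (v q.1 ^ 2)
    _ = (L * ∑ j, max (u j ^ 2) (v j ^ 2))⁻¹ * (L * ∑ k, u k * v k) := by
        rw [card_expandedSupport_union hu hv, sum_expandedSupport_inter hu hv fun i =>
          u i * v i / min (u i ^ 2) (v i ^ 2)]
        simp only [min_sq_mul_mul_div_min_sq]
    _ = (∑ k, u k * v k) / (∑ j, max (u j ^ 2) (v j ^ 2)) := by
        rw [inv_mul_eq_div, mul_div_mul_left _ _ L_ne_zero]

/-- For nonzero unit vectors `u, v` with squared entries integer multiples of `1/L` and a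
uniform hash family on `{1,...,n} × {1,...,L}`, the weighted MinHash random variable `Z`
satisfies `E[Z] = ⟨u,v⟩ / M` where `M = ∑ⱼ max(u[j]², v[j]²)`. -/
theorem weighted_minhash_expectation {n : ℕ} (L : ℕ) (hL : 0 < L)
    (u v : Fin n → ℝ) (hu0 : u ≠ 0) (hv0 : v ≠ 0)
    (hu1 : ∑ i, (u i) ^ 2 = 1) (hv1 : ∑ i, (v i) ^ 2 = 1)
    (hu : ∀ i, ∃ k : ℤ, (u i) ^ 2 = (k : ℝ) / L)
    (hv : ∀ i, ∃ k : ℤ, (v i) ^ 2 = (k : ℝ) / L)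
    (hU : (expandedSupport L u).Nonempty) (hV : (expandedSupport L v).Nonempty) :
    ∫ h, Zw u v hU hV h ∂(uniformHash (Fin n × Fin L))
      = (∑ k, u k * v k) / (∑ j, max ((u j) ^ 2) ((v j) ^ 2)) := by
  have sq_le_one {w : Fin n → ℝ} (hw : ∑ i, w i ^ 2 = 1) (i : Fin n) : w i ^ 2 ≤ 1 :=
    hw ▸ single_le_sum (f := fun j => w j ^ 2) (fun j _ => sq_nonneg (w j)) (mem_univ i)
  have : IsProbabilityMeasure (volume.restrict (Set.Icc (0 : ℝ) 1)) := ⟨by simp⟩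
  exact weighted_minhash_expectation_general _ u v (exists_le_sq_eq_div hL (sq_le_one hu1) hu)
    (exists_le_sq_eq_div hL (sq_le_one hv1) hv) hU hV
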